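/- arXiv:2301.00760 — 5 statements merged into one kernel-verified Lean document; each statement's English description precedes it below -/
import Mathlib

section
/- Let A and H be vector spaces, each equipped with a bilinear bracket [·,·] and a bilinear product · (not assumed Lie or associative), together with bilinear maps ⊲: H⊗A→H, ▷: H⊗A→A, ↼: A⊗H→A, ⇀: H⊗A→A, ←: H⊗A→H, →: A⊗H→H, σ,ω: H⊗H→A, θ,ν: A⊗A→H satisfying the cocycle conditions (CC1),(CC2),(CC5),(CC6) and the cocycle cross product system conditions (CP1)–(CP12) listed in the context. Define on E = A⊕H: [(a,x),(b,y)]_E = ([a,b] + x▷b − y▷a + σ(x,y), [x,y] + x⊲b − y⊲a + θ(a,b)) and (a,x)·_E(b,y) = (a·b + x⇀b + a↼y + ω(x,y), x·y + x←b + a→y + ν(a,b)). Assume that [·,·]_E is a Lie algebra structure on E and ·_E is an associative algebra structure on E. Then (E,[·,·]_E,·_E) is a noncommutative Poisson algebra, i.e. the Leibniz rule [u,v·_E w]_E = [u,v]_E·_E w + v·_E[u,w]_E holds for all u,v,w ∈ E. -/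
/-! The bracket on `E = A × H` is Lie and the product associative by hypothesis, so only the
Leibniz rule is at stake. Both of its sides are trilinear on `E`, so it decomposes over the eight
ways of taking each argument in `A` or in `H`, and each case splits into an `A`- and an
`H`-component. Up to sign, the resulting sixteen identities are the hypotheses `cc1`, `cc2`, `cc5`,
`cc6` and `cp1`, …, `cp12`, so each component of the rule for general elements is a signed sum of
eight of them. -/

open scoped TensorProduct

noncomputable section

namespace NCP

section Maps

variable (k : Type*) [Field k]
variable (M N P : Type*) [AddCommGroup M] [Module k M] [AddCommGroup N] [Module k N]
  [AddCommGroup P] [Module k P]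

/-- The flip map `τ : M ⊗ N → N ⊗ M`. -/
def τ : M ⊗[k] N →ₗ[k] N ⊗[k] M := (TensorProduct.comm k M N).toLinearMap

/-- The associator `(M ⊗ N) ⊗ P → M ⊗ (N ⊗ P)` as a linear map. -/
def asc : (M ⊗[k] N) ⊗[k] P →ₗ[k] M ⊗[k] (N ⊗[k] P) :=
  (TensorProduct.assoc k M N P).toLinearMap

/-- `τ₁₂`, swapping the first two factors of a triple tensor product. -/
def τ₁₂ : M ⊗[k] (N ⊗[k] P) →ₗ[k] N ⊗[k] (M ⊗[k] P) :=
  asc k N M P ∘ₗ TensorProduct.map (τ k M N) LinearMap.id ∘ₗ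
    (TensorProduct.assoc k M N P).symm.toLinearMap

end Maps

section Cyc

variable (k : Type*) [Field k] (M : Type*) [AddCommGroup M] [Module k M]

/-- The cyclic permutation `a ⊗ (b ⊗ c) ↦ c ⊗ (a ⊗ b)` on `M ⊗ (M ⊗ M)`. -/
def cyc : M ⊗[k] (M ⊗[k] M) →ₗ[k] M ⊗[k] (M ⊗[k] M) :=
  (TensorProduct.comm k (M ⊗[k] M) M).toLinearMap ∘ₗ (TensorProduct.assoc k M M M).symm.toLinearMap

end Cyc

section MapsId

variable (k : Type*) [Field k] {M N : Type*} (P : Type*) [AddCommGroup M] [Module k M]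
  [AddCommGroup N] [Module k N] [AddCommGroup P] [Module k P]

/-- `f ⊗ id` on `M ⊗ P`. -/
def lm (f : M →ₗ[k] N) : M ⊗[k] P →ₗ[k] N ⊗[k] P := TensorProduct.map f LinearMap.id

/-- `id ⊗ f` on `P ⊗ M`. -/
def rm (f : M →ₗ[k] N) : P ⊗[k] M →ₗ[k] P ⊗[k] N := TensorProduct.map LinearMap.id f

end MapsId

section Bil

variable (k : Type*) [Field k] {X Y Z M N P : Type*}
  [AddCommGroup X] [Module k X] [AddCommGroup Y] [Module k Y] [AddCommGroup Z] [Module k Z]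
  [AddCommGroup M] [Module k M] [AddCommGroup N] [Module k N] [AddCommGroup P] [Module k P]

/-- Transport a bilinear map along linear maps. -/
def bil (B : M →ₗ[k] N →ₗ[k] P) (f : X →ₗ[k] M) (g : Y →ₗ[k] N) (h : P →ₗ[k] Z) :
    X →ₗ[k] Y →ₗ[k] Z := ((B.compr₂ h).compl₂ g).comp f

@[simp] lemma bil_apply (B : M →ₗ[k] N →ₗ[k] P) (f : X →ₗ[k] M) (g : Y →ₗ[k] N)
    (h : P →ₗ[k] Z) (x : X) (y : Y) : bil k B f g h x y = h (B (f x) (g y)) := rfl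

end Bil

section Alg

variable (k : Type*) [Field k] {A B : Type*} [AddCommGroup A] [Module k A]
  [AddCommGroup B] [Module k B]

/-- A Lie bracket: bilinear, antisymmetric, Jacobi. -/
def IsLieBracket (br : A →ₗ[k] A →ₗ[k] A) : Prop :=
  (∀ x y, br x y = - br y x) ∧
  (∀ x y z, br x (br y z) + br y (br z x) + br z (br x y) = 0)

/-- Associativity of a bilinear product. -/
def IsAssociative (m : A →ₗ[k] A →ₗ[k] A) : Prop :=
  ∀ x y z, m (m x y) z = m x (m y z)

/-- The Leibniz rule relating a bracket and a product. -/
def LeibnizRule (br m : A →ₗ[k] A →ₗ[k] A) : Prop :=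
  ∀ x y z, br x (m y z) = m (br x y) z + m y (br x z)

/-- Noncommutative Poisson algebra. -/
def IsNCPoissonAlgebra (br m : A →ₗ[k] A →ₗ[k] A) : Prop :=
  IsLieBracket k br ∧ IsAssociative k m ∧ LeibnizRule k br m

/-- Coassociativity of a comultiplication. -/
def IsCoassociative (Δ : A →ₗ[k] A ⊗[k] A) : Prop :=
  asc k A A A ∘ₗ TensorProduct.map Δ LinearMap.id ∘ₗ Δ =
    TensorProduct.map LinearMap.id Δ ∘ₗ Δ

/-- A Lie cobracket: co-antisymmetric and co-Jacobi. -/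
def IsLieCobracket (δ : A →ₗ[k] A ⊗[k] A) : Prop :=
  τ k A A ∘ₗ δ = - δ ∧
  (LinearMap.id + cyc k A + cyc k A ∘ₗ cyc k A) ∘ₗ TensorProduct.map LinearMap.id δ ∘ₗ δ = 0

/-- The compatibility between cobrackets of a noncommutative Poisson coalgebra. -/
def PoissonCoCompat (δ Δ : A →ₗ[k] A ⊗[k] A) : Prop :=
  TensorProduct.map LinearMap.id Δ ∘ₗ δ =
    asc k A A A ∘ₗ TensorProduct.map δ LinearMap.id ∘ₗ Δ
    + τ₁₂ k A A A ∘ₗ TensorProduct.map LinearMap.id δ ∘ₗ Δ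

/-- Noncommutative Poisson coalgebra. -/
def IsNCPoissonCoalgebra (δ Δ : A →ₗ[k] A ⊗[k] A) : Prop :=
  IsLieCobracket k δ ∧ IsCoassociative k Δ ∧ PoissonCoCompat k δ Δ

/-- Lie bialgebra compatibility. -/
def IsLieBialgebraCompat (br : A →ₗ[k] A →ₗ[k] A) (δ : A →ₗ[k] A ⊗[k] A) : Prop :=
  ∀ x y, δ (br x y) =
    TensorProduct.map (br x) LinearMap.id (δ y) + TensorProduct.map LinearMap.id (br x) (δ y)
    - TensorProduct.map (br y) LinearMap.id (δ x) - TensorProduct.map LinearMap.id (br y) (δ x)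

/-- Antisymmetric infinitesimal bialgebra compatibility. -/
def IsASIBialgebra (m : A →ₗ[k] A →ₗ[k] A) (Δ : A →ₗ[k] A ⊗[k] A) : Prop :=
  (∀ x y, Δ (m x y) =
    TensorProduct.map (m x) LinearMap.id (Δ y)
    + TensorProduct.map LinearMap.id (m.flip y) (Δ x)) ∧
  (∀ x y,
    TensorProduct.map (m x) LinearMap.id (Δ y) - TensorProduct.map LinearMap.id (m.flip x) (Δ y)
    + τ k A A (TensorProduct.map (m y) LinearMap.id (Δ x)
        - TensorProduct.map LinearMap.id (m.flip y) (Δ x)) = 0)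

/-- `δ(x·y) = x·y₍₁₎⊗y₍₂₎ + x₍₁₎·y⊗x₍₂₎ + y₁⊗[x,y₂] + x₂⊗[y,x₁]`. -/
def PoissonBiCompat1 (br m : A →ₗ[k] A →ₗ[k] A) (δ Δ : A →ₗ[k] A ⊗[k] A) : Prop :=
  ∀ x y, δ (m x y) =
    TensorProduct.map (m x) LinearMap.id (δ y) + TensorProduct.map (m.flip y) LinearMap.id (δ x)
    + TensorProduct.map LinearMap.id (br x) (Δ y)
    + TensorProduct.map LinearMap.id (br y) (τ k A A (Δ x))

/-- `Δ([x,y]) = [x,y₁]⊗y₂ + y₁⊗[x,y₂] + x₍₁₎·y⊗x₍₂₎ − x₍₁₎⊗y·x₍₂₎`. -/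
def PoissonBiCompat2 (br m : A →ₗ[k] A →ₗ[k] A) (δ Δ : A →ₗ[k] A ⊗[k] A) : Prop :=
  ∀ x y, Δ (br x y) =
    TensorProduct.map (br x) LinearMap.id (Δ y) + TensorProduct.map LinearMap.id (br x) (Δ y)
    + TensorProduct.map (m.flip y) LinearMap.id (δ x)
    - TensorProduct.map LinearMap.id (m y) (δ x)

/-- Noncommutative Poisson bialgebra. -/
def IsNCPoissonBialgebra (br m : A →ₗ[k] A →ₗ[k] A) (δ Δ : A →ₗ[k] A ⊗[k] A) : Prop :=
  IsNCPoissonAlgebra k br m ∧ IsNCPoissonCoalgebra k δ Δ ∧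
  IsLieBialgebraCompat k br δ ∧ IsASIBialgebra k m Δ ∧
  PoissonBiCompat1 k br m δ Δ ∧ PoissonBiCompat2 k br m δ Δ

/-- A linear map is a homomorphism of (bracket, product) algebras. -/
def IsAlgMapHom (br m : A →ₗ[k] A →ₗ[k] A) (br' m' : B →ₗ[k] B →ₗ[k] B)
    (f : A →ₗ[k] B) : Prop :=
  (∀ u v, f (br u v) = br' (f u) (f v)) ∧ (∀ u v, f (m u v) = m' (f u) (f v))

/-- A linear map is a homomorphism of (δ, Δ) coalgebras. -/
def IsCoalgMapHom (δ Δ : A →ₗ[k] A ⊗[k] A) (δ' Δ' : B →ₗ[k] B ⊗[k] B)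
    (f : A →ₗ[k] B) : Prop :=
  TensorProduct.map f f ∘ₗ δ = δ' ∘ₗ f ∧ TensorProduct.map f f ∘ₗ Δ = Δ' ∘ₗ f

end Alg

section ProdOps

variable (k : Type*) [Field k] {A V : Type*} [AddCommGroup A] [Module k A]
  [AddCommGroup V] [Module k V]

/-- Cocycle cross product bracket on `A × V`:
`[(a,x),(b,y)] = ([a,b] + x▷b − y▷a + σ(x,y), [x,y] + x⊲b − y⊲a + θ(a,b))`. -/
def ccBr (brA : A →ₗ[k] A →ₗ[k] A) (brV : V →ₗ[k] V →ₗ[k] V)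
    (tr : V →ₗ[k] A →ₗ[k] A) (tl : V →ₗ[k] A →ₗ[k] V)
    (σ : V →ₗ[k] V →ₗ[k] A) (θ : A →ₗ[k] A →ₗ[k] V) :
    (A × V) →ₗ[k] (A × V) →ₗ[k] (A × V) :=
  bil k brA (LinearMap.fst k A V) (LinearMap.fst k A V) (LinearMap.inl k A V)
  + bil k tr (LinearMap.snd k A V) (LinearMap.fst k A V) (LinearMap.inl k A V)
  - bil k tr.flip (LinearMap.fst k A V) (LinearMap.snd k A V) (LinearMap.inl k A V)
  + bil k σ (LinearMap.snd k A V) (LinearMap.snd k A V) (LinearMap.inl k A V)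
  + bil k brV (LinearMap.snd k A V) (LinearMap.snd k A V) (LinearMap.inr k A V)
  + bil k tl (LinearMap.snd k A V) (LinearMap.fst k A V) (LinearMap.inr k A V)
  - bil k tl.flip (LinearMap.fst k A V) (LinearMap.snd k A V) (LinearMap.inr k A V)
  + bil k θ (LinearMap.fst k A V) (LinearMap.fst k A V) (LinearMap.inr k A V)

/-- Cocycle cross product multiplication on `A × V`:
`(a,x)·(b,y) = (ab + x⇀b + a↼y + ω(x,y), xy + x←b + a→y + ν(a,b))`. -/
def ccMul (mA : A →ₗ[k] A →ₗ[k] A) (mV : V →ₗ[k] V →ₗ[k] V)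
    (hp : V →ₗ[k] A →ₗ[k] A) (hl : A →ₗ[k] V →ₗ[k] A) (ω : V →ₗ[k] V →ₗ[k] A)
    (la : V →ₗ[k] A →ₗ[k] V) (ra : A →ₗ[k] V →ₗ[k] V) (ν : A →ₗ[k] A →ₗ[k] V) :
    (A × V) →ₗ[k] (A × V) →ₗ[k] (A × V) :=
  bil k mA (LinearMap.fst k A V) (LinearMap.fst k A V) (LinearMap.inl k A V)
  + bil k hp (LinearMap.snd k A V) (LinearMap.fst k A V) (LinearMap.inl k A V)
  + bil k hl (LinearMap.fst k A V) (LinearMap.snd k A V) (LinearMap.inl k A V)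
  + bil k ω (LinearMap.snd k A V) (LinearMap.snd k A V) (LinearMap.inl k A V)
  + bil k mV (LinearMap.snd k A V) (LinearMap.snd k A V) (LinearMap.inr k A V)
  + bil k la (LinearMap.snd k A V) (LinearMap.fst k A V) (LinearMap.inr k A V)
  + bil k ra (LinearMap.fst k A V) (LinearMap.snd k A V) (LinearMap.inr k A V)
  + bil k ν (LinearMap.fst k A V) (LinearMap.fst k A V) (LinearMap.inr k A V)

/-- Type-(a1) unified product bracket:
`[(a,x),(b,y)] = ([a,b], [x,y]_V + x⊳b − y⊳a + θ(a,b))`. -/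
def a1Br (brA : A →ₗ[k] A →ₗ[k] A) (brV : V →ₗ[k] V →ₗ[k] V)
    (tl : V →ₗ[k] A →ₗ[k] V) (θ : A →ₗ[k] A →ₗ[k] V) :
    (A × V) →ₗ[k] (A × V) →ₗ[k] (A × V) :=
  bil k brA (LinearMap.fst k A V) (LinearMap.fst k A V) (LinearMap.inl k A V)
  + bil k brV (LinearMap.snd k A V) (LinearMap.snd k A V) (LinearMap.inr k A V)
  + bil k tl (LinearMap.snd k A V) (LinearMap.fst k A V) (LinearMap.inr k A V)
  - bil k tl.flip (LinearMap.fst k A V) (LinearMap.snd k A V) (LinearMap.inr k A V)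
  + bil k θ (LinearMap.fst k A V) (LinearMap.fst k A V) (LinearMap.inr k A V)

/-- Type-(a1) unified product multiplication:
`(a,x)·(b,y) = (a·b, x·_V y + x←b + a→y + ν(a,b))`. -/
def a1Mul (mA : A →ₗ[k] A →ₗ[k] A) (mV : V →ₗ[k] V →ₗ[k] V)
    (la : V →ₗ[k] A →ₗ[k] V) (ra : A →ₗ[k] V →ₗ[k] V) (ν : A →ₗ[k] A →ₗ[k] V) :
    (A × V) →ₗ[k] (A × V) →ₗ[k] (A × V) :=
  bil k mA (LinearMap.fst k A V) (LinearMap.fst k A V) (LinearMap.inl k A V)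
  + bil k mV (LinearMap.snd k A V) (LinearMap.snd k A V) (LinearMap.inr k A V)
  + bil k la (LinearMap.snd k A V) (LinearMap.fst k A V) (LinearMap.inr k A V)
  + bil k ra (LinearMap.fst k A V) (LinearMap.snd k A V) (LinearMap.inr k A V)
  + bil k ν (LinearMap.fst k A V) (LinearMap.fst k A V) (LinearMap.inr k A V)

/-- Type-(a2) unified product bracket:
`[(a,x),(b,y)] = ([a,b] + x▷b − y▷a + σ(x,y), [x,y]_V + x⊳b − y⊳a)`. -/
def a2Br (brA : A →ₗ[k] A →ₗ[k] A) (brV : V →ₗ[k] V →ₗ[k] V)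
    (tr : V →ₗ[k] A →ₗ[k] A) (tl : V →ₗ[k] A →ₗ[k] V) (σ : V →ₗ[k] V →ₗ[k] A) :
    (A × V) →ₗ[k] (A × V) →ₗ[k] (A × V) :=
  bil k brA (LinearMap.fst k A V) (LinearMap.fst k A V) (LinearMap.inl k A V)
  + bil k tr (LinearMap.snd k A V) (LinearMap.fst k A V) (LinearMap.inl k A V)
  - bil k tr.flip (LinearMap.fst k A V) (LinearMap.snd k A V) (LinearMap.inl k A V)
  + bil k σ (LinearMap.snd k A V) (LinearMap.snd k A V) (LinearMap.inl k A V)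
  + bil k brV (LinearMap.snd k A V) (LinearMap.snd k A V) (LinearMap.inr k A V)
  + bil k tl (LinearMap.snd k A V) (LinearMap.fst k A V) (LinearMap.inr k A V)
  - bil k tl.flip (LinearMap.fst k A V) (LinearMap.snd k A V) (LinearMap.inr k A V)

/-- Type-(a2) unified product multiplication:
`(a,x)·(b,y) = (ab + x⇀b + a↼y + ω(x,y), x·_V y + x←b + a→y)`. -/
def a2Mul (mA : A →ₗ[k] A →ₗ[k] A) (mV : V →ₗ[k] V →ₗ[k] V)
    (hp : V →ₗ[k] A →ₗ[k] A) (hl : A →ₗ[k] V →ₗ[k] A) (ω : V →ₗ[k] V →ₗ[k] A)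
    (la : V →ₗ[k] A →ₗ[k] V) (ra : A →ₗ[k] V →ₗ[k] V) :
    (A × V) →ₗ[k] (A × V) →ₗ[k] (A × V) :=
  bil k mA (LinearMap.fst k A V) (LinearMap.fst k A V) (LinearMap.inl k A V)
  + bil k hp (LinearMap.snd k A V) (LinearMap.fst k A V) (LinearMap.inl k A V)
  + bil k hl (LinearMap.fst k A V) (LinearMap.snd k A V) (LinearMap.inl k A V)
  + bil k ω (LinearMap.snd k A V) (LinearMap.snd k A V) (LinearMap.inl k A V)
  + bil k mV (LinearMap.snd k A V) (LinearMap.snd k A V) (LinearMap.inr k A V)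
  + bil k la (LinearMap.snd k A V) (LinearMap.fst k A V) (LinearMap.inr k A V)
  + bil k ra (LinearMap.fst k A V) (LinearMap.snd k A V) (LinearMap.inr k A V)

/-- Biproduct bracket (no cocycles): `[(a,x),(b,y)] = ([a,b]+x▷b−y▷a, [x,y])`. -/
def bpBr (brA : A →ₗ[k] A →ₗ[k] A) (brV : V →ₗ[k] V →ₗ[k] V)
    (tr : V →ₗ[k] A →ₗ[k] A) :
    (A × V) →ₗ[k] (A × V) →ₗ[k] (A × V) :=
  bil k brA (LinearMap.fst k A V) (LinearMap.fst k A V) (LinearMap.inl k A V)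
  + bil k tr (LinearMap.snd k A V) (LinearMap.fst k A V) (LinearMap.inl k A V)
  - bil k tr.flip (LinearMap.fst k A V) (LinearMap.snd k A V) (LinearMap.inl k A V)
  + bil k brV (LinearMap.snd k A V) (LinearMap.snd k A V) (LinearMap.inr k A V)

/-- Biproduct multiplication: `(a,x)·(b,y) = (ab + x⇀b + a↼y, xy)`. -/
def bpMul (mA : A →ₗ[k] A →ₗ[k] A) (mV : V →ₗ[k] V →ₗ[k] V)
    (hp : V →ₗ[k] A →ₗ[k] A) (hl : A →ₗ[k] V →ₗ[k] A) :
    (A × V) →ₗ[k] (A × V) →ₗ[k] (A × V) :=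
  bil k mA (LinearMap.fst k A V) (LinearMap.fst k A V) (LinearMap.inl k A V)
  + bil k hp (LinearMap.snd k A V) (LinearMap.fst k A V) (LinearMap.inl k A V)
  + bil k hl (LinearMap.fst k A V) (LinearMap.snd k A V) (LinearMap.inl k A V)
  + bil k mV (LinearMap.snd k A V) (LinearMap.snd k A V) (LinearMap.inr k A V)

end ProdOps

section CoprodOps

variable (k : Type*) [Field k] {A V : Type*} [AddCommGroup A] [Module k A]
  [AddCommGroup V] [Module k V]

/-- Biproduct Lie cobracket: `δ(a,x) = δ_A(a) + φ(a) − τφ(a) + δ_V(x)`. -/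
def bpδ (δA : A →ₗ[k] A ⊗[k] A) (δV : V →ₗ[k] V ⊗[k] V) (φ : A →ₗ[k] V ⊗[k] A) :
    (A × V) →ₗ[k] (A × V) ⊗[k] (A × V) :=
  (TensorProduct.map (LinearMap.inl k A V) (LinearMap.inl k A V) ∘ₗ δA
   + TensorProduct.map (LinearMap.inr k A V) (LinearMap.inl k A V) ∘ₗ φ
   - TensorProduct.map (LinearMap.inl k A V) (LinearMap.inr k A V) ∘ₗ τ k V A ∘ₗ φ)
     ∘ₗ LinearMap.fst k A V
  + (TensorProduct.map (LinearMap.inr k A V) (LinearMap.inr k A V) ∘ₗ δV)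
      ∘ₗ LinearMap.snd k A V

/-- Biproduct comultiplication: `Δ(a,x) = Δ_A(a) + ρ(a) + γ(a) + Δ_V(x)`. -/
def bpΔ (ΔA : A →ₗ[k] A ⊗[k] A) (ΔV : V →ₗ[k] V ⊗[k] V)
    (ρ : A →ₗ[k] V ⊗[k] A) (γ : A →ₗ[k] A ⊗[k] V) :
    (A × V) →ₗ[k] (A × V) ⊗[k] (A × V) :=
  (TensorProduct.map (LinearMap.inl k A V) (LinearMap.inl k A V) ∘ₗ ΔA
   + TensorProduct.map (LinearMap.inr k A V) (LinearMap.inl k A V) ∘ₗ ρ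
   + TensorProduct.map (LinearMap.inl k A V) (LinearMap.inr k A V) ∘ₗ γ)
     ∘ₗ LinearMap.fst k A V
  + (TensorProduct.map (LinearMap.inr k A V) (LinearMap.inr k A V) ∘ₗ ΔV)
      ∘ₗ LinearMap.snd k A V

/-- Cycle cross coproduct Lie cobracket:
`δ(a) = δ_A(a) + φ(a) − τφ(a) + p(a)`, `δ(x) = δ_V(x) + ψ(x) − τψ(x) + q(x)`. -/
def ccδ (δA : A →ₗ[k] A ⊗[k] A) (δV : V →ₗ[k] V ⊗[k] V)
    (φ : A →ₗ[k] V ⊗[k] A) (ψ : V →ₗ[k] V ⊗[k] A)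
    (p : A →ₗ[k] V ⊗[k] V) (q : V →ₗ[k] A ⊗[k] A) :
    (A × V) →ₗ[k] (A × V) ⊗[k] (A × V) :=
  (TensorProduct.map (LinearMap.inl k A V) (LinearMap.inl k A V) ∘ₗ δA
   + TensorProduct.map (LinearMap.inr k A V) (LinearMap.inl k A V) ∘ₗ φ
   - TensorProduct.map (LinearMap.inl k A V) (LinearMap.inr k A V) ∘ₗ τ k V A ∘ₗ φ
   + TensorProduct.map (LinearMap.inr k A V) (LinearMap.inr k A V) ∘ₗ p)
     ∘ₗ LinearMap.fst k A V
  + (TensorProduct.map (LinearMap.inr k A V) (LinearMap.inr k A V) ∘ₗ δV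
     + TensorProduct.map (LinearMap.inr k A V) (LinearMap.inl k A V) ∘ₗ ψ
     - TensorProduct.map (LinearMap.inl k A V) (LinearMap.inr k A V) ∘ₗ τ k V A ∘ₗ ψ
     + TensorProduct.map (LinearMap.inl k A V) (LinearMap.inl k A V) ∘ₗ q)
      ∘ₗ LinearMap.snd k A V

/-- Cycle cross coproduct comultiplication:
`Δ(a) = Δ_A(a) + ρ(a) + γ(a) + s(a)`, `Δ(x) = Δ_V(x) + α(x) + β(x) + t(x)`. -/
def ccΔ (ΔA : A →ₗ[k] A ⊗[k] A) (ΔV : V →ₗ[k] V ⊗[k] V)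
    (ρ : A →ₗ[k] V ⊗[k] A) (γ : A →ₗ[k] A ⊗[k] V)
    (α : V →ₗ[k] A ⊗[k] V) (β : V →ₗ[k] V ⊗[k] A)
    (s : A →ₗ[k] V ⊗[k] V) (t : V →ₗ[k] A ⊗[k] A) :
    (A × V) →ₗ[k] (A × V) ⊗[k] (A × V) :=
  (TensorProduct.map (LinearMap.inl k A V) (LinearMap.inl k A V) ∘ₗ ΔA
   + TensorProduct.map (LinearMap.inr k A V) (LinearMap.inl k A V) ∘ₗ ρ
   + TensorProduct.map (LinearMap.inl k A V) (LinearMap.inr k A V) ∘ₗ γ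
   + TensorProduct.map (LinearMap.inr k A V) (LinearMap.inr k A V) ∘ₗ s)
     ∘ₗ LinearMap.fst k A V
  + (TensorProduct.map (LinearMap.inr k A V) (LinearMap.inr k A V) ∘ₗ ΔV
     + TensorProduct.map (LinearMap.inl k A V) (LinearMap.inr k A V) ∘ₗ α
     + TensorProduct.map (LinearMap.inr k A V) (LinearMap.inl k A V) ∘ₗ β
     + TensorProduct.map (LinearMap.inl k A V) (LinearMap.inl k A V) ∘ₗ t)
      ∘ₗ LinearMap.snd k A V

/-- Type-(c1) unified coproduct Lie cobracket. -/
def c1δ (δA : A →ₗ[k] A ⊗[k] A) (δV : V →ₗ[k] V ⊗[k] V)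
    (φ : A →ₗ[k] V ⊗[k] A) (ψ : V →ₗ[k] V ⊗[k] A) (p : A →ₗ[k] V ⊗[k] V) :
    (A × V) →ₗ[k] (A × V) ⊗[k] (A × V) :=
  (TensorProduct.map (LinearMap.inl k A V) (LinearMap.inl k A V) ∘ₗ δA
   + TensorProduct.map (LinearMap.inr k A V) (LinearMap.inl k A V) ∘ₗ φ
   - TensorProduct.map (LinearMap.inl k A V) (LinearMap.inr k A V) ∘ₗ τ k V A ∘ₗ φ
   + TensorProduct.map (LinearMap.inr k A V) (LinearMap.inr k A V) ∘ₗ p)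
     ∘ₗ LinearMap.fst k A V
  + (TensorProduct.map (LinearMap.inr k A V) (LinearMap.inr k A V) ∘ₗ δV
     + TensorProduct.map (LinearMap.inr k A V) (LinearMap.inl k A V) ∘ₗ ψ
     - TensorProduct.map (LinearMap.inl k A V) (LinearMap.inr k A V) ∘ₗ τ k V A ∘ₗ ψ)
      ∘ₗ LinearMap.snd k A V

/-- Type-(c1) unified coproduct comultiplication. -/
def c1Δ (ΔA : A →ₗ[k] A ⊗[k] A) (ΔV : V →ₗ[k] V ⊗[k] V)
    (ρ : A →ₗ[k] V ⊗[k] A) (γ : A →ₗ[k] A ⊗[k] V)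
    (α : V →ₗ[k] A ⊗[k] V) (β : V →ₗ[k] V ⊗[k] A) (s : A →ₗ[k] V ⊗[k] V) :
    (A × V) →ₗ[k] (A × V) ⊗[k] (A × V) :=
  (TensorProduct.map (LinearMap.inl k A V) (LinearMap.inl k A V) ∘ₗ ΔA
   + TensorProduct.map (LinearMap.inr k A V) (LinearMap.inl k A V) ∘ₗ ρ
   + TensorProduct.map (LinearMap.inl k A V) (LinearMap.inr k A V) ∘ₗ γ
   + TensorProduct.map (LinearMap.inr k A V) (LinearMap.inr k A V) ∘ₗ s)
     ∘ₗ LinearMap.fst k A V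
  + (TensorProduct.map (LinearMap.inr k A V) (LinearMap.inr k A V) ∘ₗ ΔV
     + TensorProduct.map (LinearMap.inl k A V) (LinearMap.inr k A V) ∘ₗ α
     + TensorProduct.map (LinearMap.inr k A V) (LinearMap.inl k A V) ∘ₗ β)
      ∘ₗ LinearMap.snd k A V

/-- Type-(c2) unified coproduct Lie cobracket. -/
def c2δ (δA : A →ₗ[k] A ⊗[k] A) (δV : V →ₗ[k] V ⊗[k] V)
    (ψ : V →ₗ[k] V ⊗[k] A) (q : V →ₗ[k] A ⊗[k] A) :
    (A × V) →ₗ[k] (A × V) ⊗[k] (A × V) :=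
  (TensorProduct.map (LinearMap.inl k A V) (LinearMap.inl k A V) ∘ₗ δA)
     ∘ₗ LinearMap.fst k A V
  + (TensorProduct.map (LinearMap.inr k A V) (LinearMap.inr k A V) ∘ₗ δV
     + TensorProduct.map (LinearMap.inr k A V) (LinearMap.inl k A V) ∘ₗ ψ
     - TensorProduct.map (LinearMap.inl k A V) (LinearMap.inr k A V) ∘ₗ τ k V A ∘ₗ ψ
     + TensorProduct.map (LinearMap.inl k A V) (LinearMap.inl k A V) ∘ₗ q)
      ∘ₗ LinearMap.snd k A V

/-- Type-(c2) unified coproduct comultiplication. -/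
def c2Δ (ΔA : A →ₗ[k] A ⊗[k] A) (ΔV : V →ₗ[k] V ⊗[k] V)
    (α : V →ₗ[k] A ⊗[k] V) (β : V →ₗ[k] V ⊗[k] A) (t : V →ₗ[k] A ⊗[k] A) :
    (A × V) →ₗ[k] (A × V) ⊗[k] (A × V) :=
  (TensorProduct.map (LinearMap.inl k A V) (LinearMap.inl k A V) ∘ₗ ΔA)
     ∘ₗ LinearMap.fst k A V
  + (TensorProduct.map (LinearMap.inr k A V) (LinearMap.inr k A V) ∘ₗ ΔV
     + TensorProduct.map (LinearMap.inl k A V) (LinearMap.inr k A V) ∘ₗ α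
     + TensorProduct.map (LinearMap.inr k A V) (LinearMap.inl k A V) ∘ₗ β
     + TensorProduct.map (LinearMap.inl k A V) (LinearMap.inl k A V) ∘ₗ t)
      ∘ₗ LinearMap.snd k A V

/-- The map `(a,x) ↦ (a + r(x), s(x))` on `A × V`. -/
def rsMap (r : V →ₗ[k] A) (s : V →ₗ[k] V) : (A × V) →ₗ[k] (A × V) :=
  LinearMap.prod (LinearMap.fst k A V + r ∘ₗ LinearMap.snd k A V) (s ∘ₗ LinearMap.snd k A V)

end CoprodOps

end NCP

end

open NCP

/-- The cocycle cross product of a cocycle cross product system is a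
noncommutative Poisson algebra, provided the bracket is a Lie bracket and the
multiplication is associative. -/
theorem statement1
    {k A H : Type*} [Field k] [CharZero k]
    [AddCommGroup A] [Module k A] [AddCommGroup H] [Module k H]
    (brA mA : A →ₗ[k] A →ₗ[k] A) (brH mH : H →ₗ[k] H →ₗ[k] H)
    (tl : H →ₗ[k] A →ₗ[k] H) (tr : H →ₗ[k] A →ₗ[k] A)
    (hl : A →ₗ[k] H →ₗ[k] A) (hp : H →ₗ[k] A →ₗ[k] A)
    (la : H →ₗ[k] A →ₗ[k] H) (ra : A →ₗ[k] H →ₗ[k] H)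
    (σ ω : H →ₗ[k] H →ₗ[k] A) (θ ν : A →ₗ[k] A →ₗ[k] H)
    -- (CC1)
    (cc1 : ∀ x y z : H, tr x (ω y z) + σ x (mH y z)
      = hl (σ x y) z + ω (brH x y) z + hp y (σ x z) + ω y (brH x z))
    -- (CC2)
    (cc2 : ∀ a b c : A, θ a (mA b c) - tl (ν b c) a
      = la (θ a b) c + ν (brA a b) c + ra b (θ a c) + ν b (brA a c))
    -- (CC5)
    (cc5 : ∀ x y z : H, brH x (mH y z) + tl x (ω y z)
      = mH (brH x y) z + ra (σ x y) z + mH y (brH x z) + la y (σ x z))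
    -- (CC6)
    (cc6 : ∀ a b c : A, brA a (mA b c) - tr (ν b c) a
      = mA (brA a b) c + hp (θ a b) c + mA b (brA a c) + hl b (θ a c))
    -- (CP1)
    (cp1 : ∀ (a b : A) (x : H), brA a (hp x b) - tr (la x b) a
      = hp x (brA a b) + ω x (θ a b) - mA (tr x a) b - hp (tl x a) b)
    -- (CP2)
    (cp2 : ∀ (a b : A) (x : H), brA a (hl b x) - tr (ra b x) a
      = hl (brA a b) x + ω (θ a b) x - mA b (tr x a) - hl b (tl x a))
    -- (CP3)
    (cp3 : ∀ (a : A) (x y : H), tr (mH x y) a - brA a (ω x y)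
      = hl (tr x a) y + ω (tl x a) y + hp x (tr y a) + ω x (tl y a))
    -- (CP4)
    (cp4 : ∀ (a b : A) (x : H), tr x (mA a b) + σ x (ν a b)
      = mA (tr x a) b + hp (tl x a) b + mA a (tr x b) + hl a (tl x b))
    -- (CP5)
    (cp5 : ∀ (a : A) (x y : H), tr x (hp y a) + σ x (la y a)
      = mA (σ x y) a + hp (brH x y) a + hp y (tr x a) + ω y (tl x a))
    -- (CP6)
    (cp6 : ∀ (a : A) (x y : H), tr x (hl a y) + σ x (ra a y)
      = mA a (σ x y) + hl a (brH x y) + hl (tr x a) y + ω (tl x a) y)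
    -- (CP7)
    (cp7 : ∀ (a : A) (x y : H), brH x (la y a) + tl x (hp y a)
      = la (brH x y) a + ν (σ x y) a + mH y (tl x a) + la y (tr x a))
    -- (CP8)
    (cp8 : ∀ (a : A) (x y : H), brH x (ra a y) + tl x (hl a y)
      = ra a (brH x y) + ν a (σ x y) + mH (tl x a) y + ra (tr x a) y)
    -- (CP9)
    (cp9 : ∀ (a b : A) (x : H), brH x (ν a b) + tl x (mA a b)
      = la (tl x a) b + ν (tr x a) b + ra a (tl x b) + ν a (tr x b))
    -- (CP10)
    (cp10 : ∀ (a : A) (x y : H), tl (mH x y) a - θ a (ω x y)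
      = mH (tl x a) y + ra (tr x a) y + mH x (tl y a) + la x (tr y a))
    -- (CP11)
    (cp11 : ∀ (a b : A) (x : H), θ a (hp x b) - tl (la x b) a
      = mH x (θ a b) + la x (brA a b) - la (tl x a) b - ν (tr x a) b)
    -- (CP12)
    (cp12 : ∀ (a b : A) (x : H), θ a (hl b x) - tl (ra b x) a
      = mH (θ a b) x + ra (brA a b) x - ra b (tl x a) - ν b (tr x a))
    -- `[·,·]_E` is a Lie bracket and `·_E` is associative
    (hLie : IsLieBracket k (ccBr k brA brH tr tl σ θ))
    (hAssoc : IsAssociative k (ccMul k mA mH hp hl ω la ra ν)) :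
    IsNCPoissonAlgebra k (ccBr k brA brH tr tl σ θ) (ccMul k mA mH hp hl ω la ra ν) := by
  refine ⟨hLie, hAssoc, ?_⟩
  rintro ⟨a, x⟩ ⟨b, y⟩ ⟨c, z⟩
  -- In both components the case `A`, `H`, `H` enters with a minus sign, because `[a, y]_E` is
  -- `(-(y ▷ a), -(y ⊲ a))` while `cp3` and `cp10` are stated with positive signs.
  ext
  · simp only [ccBr, ccMul, LinearMap.add_apply, LinearMap.sub_apply, bil_apply,
      LinearMap.fst_apply, LinearMap.snd_apply, LinearMap.inl_apply, LinearMap.inr_apply,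
      LinearMap.flip_apply, Prod.mk_add_mk, Prod.mk_sub_mk, map_add, map_sub,
      add_zero, zero_add, sub_zero]
    linear_combination (norm := module) cc6 a b c + cp1 a c y + cp2 a b z - cp3 a y z
      + cp4 b c x + cp5 c x y + cp6 b x z + cc1 x y z
  · simp only [ccBr, ccMul, LinearMap.add_apply, LinearMap.sub_apply, bil_apply,
      LinearMap.fst_apply, LinearMap.snd_apply, LinearMap.inl_apply, LinearMap.inr_apply,
      LinearMap.flip_apply, Prod.mk_add_mk, Prod.mk_sub_mk, map_add, map_sub,
      add_zero, zero_add, sub_zero]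
    linear_combination (norm := module) cc2 a b c + cp11 a c y + cp12 a b z - cp10 a y z
      + cp9 b c x + cp7 c x y + cp8 b x z + cc5 x y z
end

section
/- Let A be a noncommutative Poisson algebra and E a noncommutative Poisson algebra whose underlying vector space contains A as a subspace; let p: E→A be a linear projection with p(a) = a for all a ∈ A and set V = ker(p). Suppose V is a noncommutative Poisson subalgebra of E and p is a homomorphism of noncommutative Poisson algebras. Then there exist bilinear maps ⊳: V⊗A→V, θ,ν: A⊗A→V, ←: V⊗A→V, →: A⊗V→V and operations [·,·]_V, ·_V on V such that the type-(a1) unified product A#_{θ,ν}V on A⊕V, given by [(a,x),(b,y)] = ([a,b], [x,y]_V + x⊳b − y⊳a + θ(a,b)) and (a,x)·(b,y) = (a·b, x·_V y + x←b + a→y + ν(a,b)), is a noncommutative Poisson algebra, and the map φ: A#_{θ,ν}V → E, φ(a,x) = a + x, is an isomorphism of noncommutative Poisson algebras. (Explicitly one may take x⊳a = [x,a]_E − p([x,a]_E), θ(a,b) = [a,b]_E − p([a,b]_E), [x,y]_V = [x,y]_E, x←a = x·_E a − p(x·_E a), a→x = a·_E x − p(a·_E x), ν(a,b) = a·_E b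 − p(a·_E b), x·_V y = x·_E y.) -/
/-!
Since `p ∘ ι = id`, the space `E` splits as `ι(A) ⊕ ker p`, with `π = id - ι ∘ p` the projection onto
`ker p`, so `(a, x) ↦ ι a + x` is a linear bijection. All structure maps on `V = ker p` are
obtained by applying `π` to an operation of `E`. As `p` is multiplicative, the `A`-component of an
operation of `E` on `ι a + x`, `ι b + y` is the operation of `A` on `a`, `b`; hence the bijection
intertwines the unified product with `E`. The axioms of a noncommutative Poisson algebra are then
pulled back from `E` along this injective homomorphism (`isNCPoissonAlgebra_of_injective`), and
need not be verified on the structure maps.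
-/

open scoped TensorProduct

open NCP

/-- The axioms of a noncommutative Poisson algebra are identities, so they are inherited along an
injective linear map that preserves both operations. -/
lemma isNCPoissonAlgebra_of_injective {k B E : Type*} [Field k]
    [AddCommGroup B] [Module k B] [AddCommGroup E] [Module k E]
    {br m : B →ₗ[k] B →ₗ[k] B} {brE mE : E →ₗ[k] E →ₗ[k] E}
    (hE : IsNCPoissonAlgebra k brE mE) (e : B →ₗ[k] E) (he : Function.Injective e)
    (hbr : ∀ u v, e (br u v) = brE (e u) (e v)) (hm : ∀ u v, e (m u v) = mE (e u) (e v)) :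
    IsNCPoissonAlgebra k br m := by
  obtain ⟨⟨hanti, hjac⟩, hassoc, hleib⟩ := hE
  refine ⟨⟨fun x y => he ?_, fun x y z => he ?_⟩, fun x y z => he ?_, fun x y z => he ?_⟩
  · rw [map_neg, hbr, hbr, hanti]
  · simp only [map_add, map_zero, hbr, hjac]
  · simp only [hm, hassoc (e x)]
  · simp only [map_add, hbr, hm, hleib (e x)]

/-- The projection `u ↦ u - ι (p u)` of `E` onto `ker p`, for a section `ι` of `p`. -/
def kerProj {k A E : Type*} [Field k] [AddCommGroup A] [Module k A] [AddCommGroup E] [Module k E]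
    (ι : A →ₗ[k] E) (p : E →ₗ[k] A) (hp : ∀ a : A, p (ι a) = a) :
    E →ₗ[k] ↥(LinearMap.ker p) :=
  LinearMap.codRestrict (LinearMap.ker p) (LinearMap.id - ι ∘ₗ p) (fun u => by simp [hp])

lemma coe_kerProj {k A E : Type*} [Field k] [AddCommGroup A] [Module k A]
    [AddCommGroup E] [Module k E]
    (ι : A →ₗ[k] E) (p : E →ₗ[k] A) (hp : ∀ a : A, p (ι a) = a) (u : E) :
    (kerProj ι p hp u : E) = u - ι (p u) := rfl

/-- A noncommutative Poisson algebra structure on `E ⊇ A` for which the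
projection `p : E → A` is a homomorphism and `V = ker p` is a subalgebra is isomorphic
to a type-(a1) unified product `A #_{θ,ν} V`. -/
theorem statement4
    {k A E : Type*} [Field k] [CharZero k]
    [AddCommGroup A] [Module k A] [AddCommGroup E] [Module k E]
    (brA mA : A →ₗ[k] A →ₗ[k] A) (hA : IsNCPoissonAlgebra k brA mA)
    (brE mE : E →ₗ[k] E →ₗ[k] E) (hE : IsNCPoissonAlgebra k brE mE)
    -- `A` is a subspace of `E` via `ι`, and `p` is a linear projection onto `A`
    (ι : A →ₗ[k] E) (hι : Function.Injective ι)
    (p : E →ₗ[k] A) (hp : ∀ a : A, p (ι a) = a)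
    -- `V = ker p` is a noncommutative Poisson subalgebra of `E`
    (hVbr : ∀ u v : E, u ∈ LinearMap.ker p → v ∈ LinearMap.ker p →
      brE u v ∈ LinearMap.ker p)
    (hVmul : ∀ u v : E, u ∈ LinearMap.ker p → v ∈ LinearMap.ker p →
      mE u v ∈ LinearMap.ker p)
    -- `p` is a homomorphism of noncommutative Poisson algebras
    (hpbr : ∀ u v : E, p (brE u v) = brA (p u) (p v))
    (hpmul : ∀ u v : E, p (mE u v) = mA (p u) (p v)) :
    ∃ (brV mV : ↥(LinearMap.ker p) →ₗ[k] ↥(LinearMap.ker p) →ₗ[k] ↥(LinearMap.ker p))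
      (tl la : ↥(LinearMap.ker p) →ₗ[k] A →ₗ[k] ↥(LinearMap.ker p))
      (ra : A →ₗ[k] ↥(LinearMap.ker p) →ₗ[k] ↥(LinearMap.ker p))
      (θ ν : A →ₗ[k] A →ₗ[k] ↥(LinearMap.ker p)),
      IsNCPoissonAlgebra k (a1Br k brA brV tl θ) (a1Mul k mA mV la ra ν) ∧
      ∃ e : (A × ↥(LinearMap.ker p)) →ₗ[k] E,
        (∀ q : A × ↥(LinearMap.ker p), e q = ι q.1 + (q.2 : E)) ∧
        Function.Bijective e ∧
        (∀ u v, e (a1Br k brA brV tl θ u v) = brE (e u) (e v)) ∧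
        (∀ u v, e (a1Mul k mA mV la ra ν u v) = mE (e u) (e v)) := by
  let π := kerProj ι p hp
  let j := (LinearMap.ker p).subtype
  let e : (A × ↥(LinearMap.ker p)) →ₗ[k] E := LinearMap.coprod ι j
  have he : ∀ q : A × ↥(LinearMap.ker p), e q = ι q.1 + (q.2 : E) := fun q => rfl
  have hpV : ∀ x : ↥(LinearMap.ker p), p (x : E) = 0 := fun x => x.2
  have hbij : Function.Bijective e := by
    constructor
    · rw [injective_iff_map_eq_zero]
      rintro ⟨a, x⟩ h
      rw [he] at h
      have ha : a = 0 := by simpa [hp, hpV] using congrArg p h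
      subst ha
      simpa using h
    · intro u
      exact ⟨(p u, π u), by simp [he, π, coe_kerProj]⟩
  have hbr : ∀ u v, e (a1Br k brA (bil k brE j j π) (bil k brE j ι π) (bil k brE ι ι π) u v)
      = brE (e u) (e v) := by
    rintro ⟨a, x⟩ ⟨b, y⟩
    have hanti : brE (ι a) (y : E) = - brE (y : E) (ι a) := hE.1.1 _ _
    simp [a1Br, he, π, j, coe_kerProj, hpbr, hp, hpV, hanti]
    abel
  have hmul : ∀ u v, e (a1Mul k mA (bil k mE j j π) (bil k mE j ι π) (bil k mE ι j π)
      (bil k mE ι ι π) u v) = mE (e u) (e v) := by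
    rintro ⟨a, x⟩ ⟨b, y⟩
    simp [a1Mul, he, π, j, coe_kerProj, hpmul, hp, hpV]
    abel
  exact ⟨_, _, _, _, _, _, _, isNCPoissonAlgebra_of_injective hE e hbij.1 hbr hmul,
    e, he, hbij, hbr, hmul⟩
end

section
/- Let A be a noncommutative Poisson algebra and E a noncommutative Poisson algebra whose underlying vector space contains A as a subspace, such that A is a noncommutative Poisson subalgebra of E; let V be a vector space complement of A in E. Then there exist bilinear maps ⊳: V⊗A→V, ▷: V⊗A→A, ↼: A⊗V→A, ⇀: V⊗A→A, ←: V⊗A→V, →: A⊗V→V, σ,ω: V⊗V→A and operations [·,·]_V, ·_V on V such that the type-(a2) unified product A_{σ,ω}#V on A⊕V, given by [(a,x),(b,y)] = ([a,b] + x▷b − y▷a + σ(x,y), [x,y]_V + x⊳b − y⊳a) and (a,x)·(b,y) = (a·b + x⇀b + a↼y + ω(x,y), x·_V y + x←b + a→y), is a noncommutative Poisson algebra, and the map (a,x) ↦ a + x is an isomorphism of noncommutative Poisson algebras A_{σ,ω}#V ≅ E. -/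
/-!
Let `e : A × V → E`, `(a, x) ↦ ι a + x`. It is bijective because `V` is a complement of `ι(A)`,
so there are linear projections `pA : E → A` and `pV : E → V` with `ι (pA z) + pV z = z`.
Each structure map is obtained by applying the bracket or the product of `E` to elements of `A`
and `V` and then projecting with `pA` or `pV`. Expanding `[ι a + x, ι b + y]` and
`(ι a + x)(ι b + y)` bilinearly shows that `e` intertwines the operations; no `V`-component arises
from `A × A` because `A` is a subalgebra, and antisymmetry of the bracket of `E` handles the terms
`[ι a, y]`. The axioms for the unified product then pull back along the injective map `e`.
-/

open scoped TensorProduct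

open NCP

/-- A noncommutative Poisson algebra structure on `E` containing `A` as a
noncommutative Poisson subalgebra is isomorphic to a type-(a2) unified product
`A_{σ,ω} # V`, for any complement `V` of `A` in `E`. -/
theorem statement7
    {k A E : Type*} [Field k] [CharZero k]
    [AddCommGroup A] [Module k A] [AddCommGroup E] [Module k E]
    (brA mA : A →ₗ[k] A →ₗ[k] A) (hA : IsNCPoissonAlgebra k brA mA)
    (brE mE : E →ₗ[k] E →ₗ[k] E) (hE : IsNCPoissonAlgebra k brE mE)
    -- `A` is a noncommutative Poisson subalgebra of `E` via `ι`
    (ι : A →ₗ[k] E) (hι : Function.Injective ι)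
    (hιbr : ∀ a b : A, ι (brA a b) = brE (ι a) (ι b))
    (hιmul : ∀ a b : A, ι (mA a b) = mE (ι a) (ι b))
    -- `V` is a vector space complement of `A` in `E`
    (V : Submodule k E) (hV : IsCompl (LinearMap.range ι) V) :
    ∃ (brV mV : ↥V →ₗ[k] ↥V →ₗ[k] ↥V)
      (tl la : ↥V →ₗ[k] A →ₗ[k] ↥V) (tr : ↥V →ₗ[k] A →ₗ[k] A)
      (hl : A →ₗ[k] ↥V →ₗ[k] A) (hp : ↥V →ₗ[k] A →ₗ[k] A)
      (ra : A →ₗ[k] ↥V →ₗ[k] ↥V) (σ ω : ↥V →ₗ[k] ↥V →ₗ[k] A),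
      IsNCPoissonAlgebra k (a2Br k brA brV tr tl σ) (a2Mul k mA mV hp hl ω la ra) ∧
      ∃ e : (A × ↥V) →ₗ[k] E,
        (∀ q : A × ↥V, e q = ι q.1 + (q.2 : E)) ∧
        Function.Bijective e ∧
        (∀ u v, e (a2Br k brA brV tr tl σ u v) = brE (e u) (e v)) ∧
        (∀ u v, e (a2Mul k mA mV hp hl ω la ra u v) = mE (e u) (e v)) := by
  let e : (A × ↥V) →ₗ[k] E := ι.coprod V.subtype
  have he : ∀ q : A × ↥V, e q = ι q.1 + (q.2 : E) := fun q => rfl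
  have hbij : Function.Bijective e := by
    refine ⟨?_, ?_⟩
    · rw [← LinearMap.ker_eq_bot, LinearMap.ker_coprod_of_disjoint_range,
        LinearMap.ker_eq_bot.mpr hι, Submodule.ker_subtype, Submodule.prod_bot]
      rw [Submodule.range_subtype]
      exact hV.disjoint
    · rw [← LinearMap.range_eq_top, LinearMap.range_coprod, Submodule.range_subtype]
      exact hV.sup_eq_top
  let E' := LinearEquiv.ofBijective e hbij
  let pA : E →ₗ[k] A := LinearMap.fst k A V ∘ₗ E'.symm.toLinearMap
  let pV : E →ₗ[k] V := LinearMap.snd k A V ∘ₗ E'.symm.toLinearMap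
  have hp : ∀ z : E, ι (pA z) + (pV z : E) = z := fun z => E'.apply_symm_apply z
  let j : ↥V →ₗ[k] E := V.subtype
  have hbr : ∀ u v, e (a2Br k brA (bil k brE j j pV) (bil k brE j ι pA) (bil k brE j ι pV)
      (bil k brE j j pA) u v) = brE (e u) (e v) := by
    rintro ⟨a, x⟩ ⟨b, y⟩
    have h1 := hp (brE x (ι b))
    have h2 := hp (brE y (ι a))
    have h3 := hp (brE x y)
    have h4 := hE.1.1 (ι a) y
    simp only [he, a2Br, LinearMap.add_apply, LinearMap.sub_apply, bil_apply,
      LinearMap.flip_apply, LinearMap.fst_apply, LinearMap.snd_apply, LinearMap.inl_apply,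
      LinearMap.inr_apply, Prod.fst_add, Prod.snd_add, Prod.fst_sub, Prod.snd_sub,
      map_add, map_sub, map_zero, Submodule.coe_add, Submodule.coe_sub, Submodule.coe_zero,
      hιbr, j, Submodule.subtype_apply, h4]
    linear_combination (norm := module) h1 - h2 + h3
  have hmul : ∀ u v, e (a2Mul k mA (bil k mE j j pV) (bil k mE j ι pA) (bil k mE ι j pA)
      (bil k mE j j pA) (bil k mE j ι pV) (bil k mE ι j pV) u v) = mE (e u) (e v) := by
    rintro ⟨a, x⟩ ⟨b, y⟩
    have h1 := hp (mE x (ι b))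
    have h2 := hp (mE (ι a) y)
    have h3 := hp (mE x y)
    simp only [he, a2Mul, LinearMap.add_apply, bil_apply,
      LinearMap.fst_apply, LinearMap.snd_apply, LinearMap.inl_apply,
      LinearMap.inr_apply, Prod.fst_add, Prod.snd_add,
      map_add, map_zero, Submodule.coe_add, Submodule.coe_zero,
      hιmul, j, Submodule.subtype_apply]
    linear_combination (norm := module) h1 + h2 + h3
  exact ⟨_, _, _, _, _, _, _, _, _, _,
    isNCPoissonAlgebra_of_injective hE e hbij.1 hbr hmul, e, he, hbij, hbr, hmul⟩
end

section
/- Let (A,δ_A,Δ_A) be a noncommutative Poisson coalgebra and (E,δ_E,Δ_E) a noncommutative Poisson coalgebra whose underlying vector space contains A as a subspace; let p: E→A be a linear projection with p(a) = a for all a ∈ A and set V = ker(p). Suppose p is a homomorphism of noncommutative Poisson coalgebras. Then there exist linear maps φ: A→V⊗A, ψ: V→V⊗A, ρ: A→V⊗A, γ: A→A⊗V, α: V→A⊗V, β: V→V⊗A, p̂,ŝ: A→V⊗V and δ_V,Δ_V: V→V⊗V (explicitly: φ = (π⊗p)∘δ_E|_A, ψ = (π⊗p)∘δ_E|_V, ρ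 = (π⊗p)∘Δ_E|_A, γ = (p⊗π)∘Δ_E|_A, α = (p⊗π)∘Δ_E|_V, β = (π⊗p)∘Δ_E|_V, δ_V = (π⊗π)∘δ_E|_V, Δ_V = (π⊗π)∘Δ_E|_V, p̂ = (π⊗π)∘δ_E|_A, ŝ = (π⊗π)∘Δ_E|_A, where π = id − p) such that the type-(c1) unified coproduct A^{p̂,ŝ}#V on A⊕V, given by δ(a) = δ_A(a) + φ(a) − τφ(a) + p̂(a), δ(x) = δ_V(x) + ψ(x) − τψ(x), Δ(a) = Δ_A(a) + ρ(a) + γ(a) + ŝ(a), Δ(x) = Δ_V(x) + α(x) + β(x), is a noncommutative Poisson coalgebra, and the map (a,x) ↦ a + x is an isomorphism of noncommutative Poisson coalgebras A^{p̂,ŝ}#V ≅ E. -/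
/-!
The projection `p` splits `E` as `ι(A) ⊕ ker p`: the map `e(a, x) = ι a + x` has the two-sided inverse
`g = inl ∘ p + inr ∘ π`, where `π u = u - ι (p u)`. Both cooperations of `E` are transported to
`A × ker p` along this isomorphism. Expanding `g ⊗ g` splits the transported cooperation into the four
components `p ⊗ p`, `π ⊗ p`, `p ⊗ π`, `π ⊗ π`. Since `p` is a homomorphism, the `p ⊗ p` component
is `δ_A ∘ p` (resp. `Δ_A ∘ p`), so it vanishes on `ker p`; by antisymmetry of `δ_E` its `p ⊗ π`
component is `-τ` of the `π ⊗ p` component. The result is exactly the type-(c1) unified coproduct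
(`c1δ_eq_transport`, `c1Δ_eq_transport`). The coalgebra axioms pull back along any homomorphism
with a linear left inverse (`isNCPoissonCoalgebra_of_leftInverse`).
-/

open scoped TensorProduct

open NCP

/-! ### Naturality of the structure maps and pullback of the axioms -/

section Naturality

variable {k : Type*} [Field k] {A B : Type*} [AddCommGroup A] [Module k A]
  [AddCommGroup B] [Module k B]

lemma τ_map {A' B' : Type*} [AddCommGroup A'] [Module k A'] [AddCommGroup B'] [Module k B']
    (f : A →ₗ[k] B) (g : A' →ₗ[k] B') (u : A ⊗[k] A') :
    τ k B B' (TensorProduct.map f g u) = TensorProduct.map g f (τ k A A' u) := by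
  have h : τ k B B' ∘ₗ TensorProduct.map f g = TensorProduct.map g f ∘ₗ τ k A A' := by
    ext; simp [τ]
  exact LinearMap.congr_fun h u

lemma asc_map (f : A →ₗ[k] B) (u : (A ⊗[k] A) ⊗[k] A) :
    asc k B B B (TensorProduct.map (TensorProduct.map f f) f u) =
      TensorProduct.map f (TensorProduct.map f f) (asc k A A A u) := by
  have h : asc k B B B ∘ₗ TensorProduct.map (TensorProduct.map f f) f =
      TensorProduct.map f (TensorProduct.map f f) ∘ₗ asc k A A A := by
    ext; simp [asc]
  exact LinearMap.congr_fun h u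

lemma τ₁₂_map (f : A →ₗ[k] B) (u : A ⊗[k] (A ⊗[k] A)) :
    τ₁₂ k B B B (TensorProduct.map f (TensorProduct.map f f) u) =
      TensorProduct.map f (TensorProduct.map f f) (τ₁₂ k A A A u) := by
  have h : τ₁₂ k B B B ∘ₗ TensorProduct.map f (TensorProduct.map f f) =
      TensorProduct.map f (TensorProduct.map f f) ∘ₗ τ₁₂ k A A A := by
    ext; simp [τ₁₂, asc, τ]
  exact LinearMap.congr_fun h u

lemma cyc_map (f : A →ₗ[k] B) (u : A ⊗[k] (A ⊗[k] A)) :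
    cyc k B (TensorProduct.map f (TensorProduct.map f f) u) =
      TensorProduct.map f (TensorProduct.map f f) (cyc k A u) := by
  have h : cyc k B ∘ₗ TensorProduct.map f (TensorProduct.map f f) =
      TensorProduct.map f (TensorProduct.map f f) ∘ₗ cyc k A := by
    ext; simp [cyc]
  exact LinearMap.congr_fun h u

lemma map_id_comul (f : A →ₗ[k] B) (d : A →ₗ[k] A ⊗[k] A) (d' : B →ₗ[k] B ⊗[k] B)
    (h : TensorProduct.map f f ∘ₗ d = d' ∘ₗ f) (u : A ⊗[k] A) :
    TensorProduct.map f (TensorProduct.map f f) (TensorProduct.map LinearMap.id d u) =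
      TensorProduct.map LinearMap.id d' (TensorProduct.map f f u) := by
  rw [← LinearMap.comp_apply, ← LinearMap.comp_apply, ← TensorProduct.map_comp,
    ← TensorProduct.map_comp, h, LinearMap.id_comp, LinearMap.comp_id]

lemma map_comul_id (f : A →ₗ[k] B) (d : A →ₗ[k] A ⊗[k] A) (d' : B →ₗ[k] B ⊗[k] B)
    (h : TensorProduct.map f f ∘ₗ d = d' ∘ₗ f) (u : A ⊗[k] A) :
    TensorProduct.map (TensorProduct.map f f) f (TensorProduct.map d LinearMap.id u) =
      TensorProduct.map d' LinearMap.id (TensorProduct.map f f u) := by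
  rw [← LinearMap.comp_apply, ← LinearMap.comp_apply, ← TensorProduct.map_comp,
    ← TensorProduct.map_comp, h, LinearMap.id_comp, LinearMap.comp_id]

/-- The noncommutative Poisson coalgebra axioms pull back along a homomorphism with a linear left
inverse: `f ⊗ f` and `f ⊗ f ⊗ f` are then injective and intertwine both sides of each axiom. -/
lemma isNCPoissonCoalgebra_of_leftInverse (f : A →ₗ[k] B) (g : B →ₗ[k] A)
    (hgf : g ∘ₗ f = LinearMap.id)
    {δ Δ : A →ₗ[k] A ⊗[k] A} {δ' Δ' : B →ₗ[k] B ⊗[k] B}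
    (hf : IsCoalgMapHom k δ Δ δ' Δ' f) (hB : IsNCPoissonCoalgebra k δ' Δ') :
    IsNCPoissonCoalgebra k δ Δ := by
  obtain ⟨hδ, hΔ⟩ := hf
  obtain ⟨⟨hanti, hjac⟩, hcoassoc, hcompat⟩ := hB
  have inj2 : Function.Injective (TensorProduct.map f f) := by
    apply Function.LeftInverse.injective (g := TensorProduct.map g g)
    intro u
    rw [← LinearMap.comp_apply, ← TensorProduct.map_comp, hgf, TensorProduct.map_id,
      LinearMap.id_apply]
  have inj3 : Function.Injective (TensorProduct.map f (TensorProduct.map f f)) := by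
    apply Function.LeftInverse.injective (g := TensorProduct.map g (TensorProduct.map g g))
    intro u
    rw [← LinearMap.comp_apply, ← TensorProduct.map_comp, ← TensorProduct.map_comp, hgf,
      TensorProduct.map_id, TensorProduct.map_id, LinearMap.id_apply]
  have eδ (x : A) : TensorProduct.map f f (δ x) = δ' (f x) := LinearMap.congr_fun hδ x
  have eΔ (x : A) : TensorProduct.map f f (Δ x) = Δ' (f x) := LinearMap.congr_fun hΔ x
  refine ⟨⟨?_, ?_⟩, ?_, ?_⟩
  · ext1 x
    apply inj2
    have h := LinearMap.congr_fun hanti (f x)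
    simp only [LinearMap.comp_apply, LinearMap.neg_apply, map_neg, ← τ_map, eδ] at h ⊢
    exact h
  · ext1 x
    apply inj3
    have h := LinearMap.congr_fun hjac (f x)
    simp only [LinearMap.comp_apply, LinearMap.add_apply, LinearMap.id_apply,
      LinearMap.zero_apply, map_add, map_zero, ← cyc_map, map_id_comul f δ δ' hδ, eδ] at h ⊢
    exact h
  · unfold IsCoassociative
    ext1 x
    apply inj3
    have h := LinearMap.congr_fun hcoassoc (f x)
    simp only [LinearMap.comp_apply, ← asc_map, map_id_comul f Δ Δ' hΔ,
      map_comul_id f Δ Δ' hΔ, eΔ] at h ⊢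
    exact h
  · unfold PoissonCoCompat
    ext1 x
    apply inj3
    have h := LinearMap.congr_fun hcompat (f x)
    simp only [LinearMap.comp_apply, LinearMap.add_apply, map_add, ← asc_map, ← τ₁₂_map,
      map_id_comul f Δ Δ' hΔ, map_id_comul f δ δ' hδ, map_comul_id f δ δ' hδ, eδ, eΔ] at h ⊢
    exact h

end Naturality

/-! ### The components of a transported cooperation -/

section Transport

variable {k : Type*} [Field k] {A V E : Type*} [AddCommGroup A] [Module k A]
  [AddCommGroup V] [Module k V] [AddCommGroup E] [Module k E]

/-- The four-component expansion of `g ⊗ g` for `g = inl ∘ p + inr ∘ π`. -/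
lemma map_inl_add_inr (p : E →ₗ[k] A) (π : E →ₗ[k] V) (u : E ⊗[k] E) :
    TensorProduct.map (LinearMap.inl k A V ∘ₗ p + LinearMap.inr k A V ∘ₗ π)
      (LinearMap.inl k A V ∘ₗ p + LinearMap.inr k A V ∘ₗ π) u =
    TensorProduct.map (LinearMap.inl k A V) (LinearMap.inl k A V) (TensorProduct.map p p u)
    + TensorProduct.map (LinearMap.inr k A V) (LinearMap.inl k A V) (TensorProduct.map π p u)
    + TensorProduct.map (LinearMap.inl k A V) (LinearMap.inr k A V) (TensorProduct.map p π u)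
    + TensorProduct.map (LinearMap.inr k A V) (LinearMap.inr k A V)
        (TensorProduct.map π π u) := by
  simp only [TensorProduct.map_add_left, TensorProduct.map_add_right, TensorProduct.map_comp,
    LinearMap.add_apply, LinearMap.comp_apply]
  abel

/-- The transport of `δE` along `(a, x) ↦ ι a + j x`, with inverse `u ↦ (p u, π u)`, is the
type-(c1) cobracket. The hypothesis `p ∘ j = 0` kills the `A ⊗ A` component on `V`. -/
lemma c1δ_eq_transport {δA : A →ₗ[k] A ⊗[k] A} {δE : E →ₗ[k] E ⊗[k] E}
    (hanti : τ k E E ∘ₗ δE = -δE) (ι : A →ₗ[k] E) (j : V →ₗ[k] E) (p : E →ₗ[k] A)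
    (π : E →ₗ[k] V) (hpι : ∀ a, p (ι a) = a) (hpj : ∀ x, p (j x) = 0)
    (hp : TensorProduct.map p p ∘ₗ δE = δA ∘ₗ p) (q : A × V) :
    c1δ k δA (TensorProduct.map π π ∘ₗ δE ∘ₗ j) (TensorProduct.map π p ∘ₗ δE ∘ₗ ι)
      (TensorProduct.map π p ∘ₗ δE ∘ₗ j) (TensorProduct.map π π ∘ₗ δE ∘ₗ ι) q =
    TensorProduct.map (LinearMap.inl k A V ∘ₗ p + LinearMap.inr k A V ∘ₗ π)
      (LinearMap.inl k A V ∘ₗ p + LinearMap.inr k A V ∘ₗ π) (δE (ι q.1 + j q.2)) := by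
  have hp' (u : E) : TensorProduct.map p p (δE u) = δA (p u) := LinearMap.congr_fun hp u
  have ha (u : E) : τ k E E (δE u) = -δE u := LinearMap.congr_fun hanti u
  rw [map_inl_add_inr, hp']
  simp only [c1δ, LinearMap.add_apply, LinearMap.sub_apply, LinearMap.comp_apply,
    LinearMap.fst_apply, LinearMap.snd_apply, map_add, hpι, hpj, map_zero, τ_map, ha, map_neg]
  abel

/-- The transport of `ΔE` along `(a, x) ↦ ι a + j x`, with inverse `u ↦ (p u, π u)`, is the
type-(c1) comultiplication. -/
lemma c1Δ_eq_transport {ΔA : A →ₗ[k] A ⊗[k] A} {ΔE : E →ₗ[k] E ⊗[k] E}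
    (ι : A →ₗ[k] E) (j : V →ₗ[k] E) (p : E →ₗ[k] A)
    (π : E →ₗ[k] V) (hpι : ∀ a, p (ι a) = a) (hpj : ∀ x, p (j x) = 0)
    (hp : TensorProduct.map p p ∘ₗ ΔE = ΔA ∘ₗ p) (q : A × V) :
    c1Δ k ΔA (TensorProduct.map π π ∘ₗ ΔE ∘ₗ j) (TensorProduct.map π p ∘ₗ ΔE ∘ₗ ι)
      (TensorProduct.map p π ∘ₗ ΔE ∘ₗ ι) (TensorProduct.map p π ∘ₗ ΔE ∘ₗ j)
      (TensorProduct.map π p ∘ₗ ΔE ∘ₗ j) (TensorProduct.map π π ∘ₗ ΔE ∘ₗ ι) q =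
    TensorProduct.map (LinearMap.inl k A V ∘ₗ p + LinearMap.inr k A V ∘ₗ π)
      (LinearMap.inl k A V ∘ₗ p + LinearMap.inr k A V ∘ₗ π) (ΔE (ι q.1 + j q.2)) := by
  have hp' (u : E) : TensorProduct.map p p (ΔE u) = ΔA (p u) := LinearMap.congr_fun hp u
  rw [map_inl_add_inr, hp']
  simp only [c1Δ, LinearMap.add_apply, LinearMap.comp_apply,
    LinearMap.fst_apply, LinearMap.snd_apply, map_add, hpι, hpj, map_zero]
  abel

end Transport

/-! ### The splitting of `E` -/

/-- A noncommutative Poisson coalgebra structure on `E ⊇ A` for which the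
projection `p : E → A` is a homomorphism of noncommutative Poisson coalgebras is
isomorphic to a type-(c1) unified coproduct `A^{p̂,ŝ} # V` on `A ⊕ V`, `V = ker p`. -/
theorem statement11
    {k A E : Type*} [Field k] [CharZero k]
    [AddCommGroup A] [Module k A] [AddCommGroup E] [Module k E]
    (δA ΔA : A →ₗ[k] A ⊗[k] A) (hA : IsNCPoissonCoalgebra k δA ΔA)
    (δE ΔE : E →ₗ[k] E ⊗[k] E) (hE : IsNCPoissonCoalgebra k δE ΔE)
    -- `A` is a subspace of `E` via `ι`, and `p` is a linear projection onto `A`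
    (ι : A →ₗ[k] E) (hι : Function.Injective ι)
    (p : E →ₗ[k] A) (hp : ∀ a : A, p (ι a) = a)
    -- `p` is a homomorphism of noncommutative Poisson coalgebras
    (hpδ : TensorProduct.map p p ∘ₗ δE = δA ∘ₗ p)
    (hpΔ : TensorProduct.map p p ∘ₗ ΔE = ΔA ∘ₗ p) :
    ∃ (φ ρ : A →ₗ[k] ↥(LinearMap.ker p) ⊗[k] A)
      (γ : A →ₗ[k] A ⊗[k] ↥(LinearMap.ker p))
      (ψ : ↥(LinearMap.ker p) →ₗ[k] ↥(LinearMap.ker p) ⊗[k] A)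
      (α : ↥(LinearMap.ker p) →ₗ[k] A ⊗[k] ↥(LinearMap.ker p))
      (β : ↥(LinearMap.ker p) →ₗ[k] ↥(LinearMap.ker p) ⊗[k] A)
      (ph sh : A →ₗ[k] ↥(LinearMap.ker p) ⊗[k] ↥(LinearMap.ker p))
      (δV ΔV : ↥(LinearMap.ker p) →ₗ[k] ↥(LinearMap.ker p) ⊗[k] ↥(LinearMap.ker p)),
      IsNCPoissonCoalgebra k (c1δ k δA δV φ ψ ph) (c1Δ k ΔA ΔV ρ γ α β sh) ∧
      ∃ e : (A × ↥(LinearMap.ker p)) →ₗ[k] E,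
        (∀ q : A × ↥(LinearMap.ker p), e q = ι q.1 + (q.2 : E)) ∧
        Function.Bijective e ∧
        TensorProduct.map e e ∘ₗ c1δ k δA δV φ ψ ph = δE ∘ₗ e ∧
        TensorProduct.map e e ∘ₗ c1Δ k ΔA ΔV ρ γ α β sh = ΔE ∘ₗ e := by
  let j : ↥(LinearMap.ker p) →ₗ[k] E := (LinearMap.ker p).subtype
  let π : E →ₗ[k] ↥(LinearMap.ker p) :=
    LinearMap.codRestrict (LinearMap.ker p) (LinearMap.id - ι ∘ₗ p) (fun u => by simp [hp])
  have hpj : ∀ x, p (j x) = 0 := fun x => x.2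
  let e : (A × ↥(LinearMap.ker p)) →ₗ[k] E :=
    ι ∘ₗ LinearMap.fst k A _ + j ∘ₗ LinearMap.snd k A _
  let g : E →ₗ[k] A × ↥(LinearMap.ker p) :=
    LinearMap.inl k A _ ∘ₗ p + LinearMap.inr k A _ ∘ₗ π
  have he (q : A × ↥(LinearMap.ker p)) : e q = ι q.1 + j q.2 := rfl
  have heg (u : E) : e (g u) = u := by
    simp [he, g, j, π]
  have hge (q : A × ↥(LinearMap.ker p)) : g (e q) = q := by
    have h2 : p (e q) = q.1 := by rw [he, map_add, hp, hpj, add_zero]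
    have h3 : π (e q) = q.2 := by
      apply Subtype.ext
      change e q - ι (p (e q)) = (q.2 : E)
      rw [h2, he]
      exact add_sub_cancel_left _ _
    ext1
    · simpa [g] using h2
    · simpa [g] using h3
  have heg2 (u : E ⊗[k] E) : TensorProduct.map e e (TensorProduct.map g g u) = u := by
    rw [← LinearMap.comp_apply, ← TensorProduct.map_comp,
      show e ∘ₗ g = LinearMap.id from LinearMap.ext heg, TensorProduct.map_id,
      LinearMap.id_apply]
  have hom : IsCoalgMapHom k
      (c1δ k δA (TensorProduct.map π π ∘ₗ δE ∘ₗ j) (TensorProduct.map π p ∘ₗ δE ∘ₗ ι)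
        (TensorProduct.map π p ∘ₗ δE ∘ₗ j) (TensorProduct.map π π ∘ₗ δE ∘ₗ ι))
      (c1Δ k ΔA (TensorProduct.map π π ∘ₗ ΔE ∘ₗ j) (TensorProduct.map π p ∘ₗ ΔE ∘ₗ ι)
        (TensorProduct.map p π ∘ₗ ΔE ∘ₗ ι) (TensorProduct.map p π ∘ₗ ΔE ∘ₗ j)
        (TensorProduct.map π p ∘ₗ ΔE ∘ₗ j) (TensorProduct.map π π ∘ₗ ΔE ∘ₗ ι)) δE ΔE e := by
    constructor <;> refine LinearMap.ext fun q => ?_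
    · rw [LinearMap.comp_apply, c1δ_eq_transport hE.1.1 ι j p π hp hpj hpδ]
      exact heg2 _
    · rw [LinearMap.comp_apply, c1Δ_eq_transport ι j p π hp hpj hpΔ]
      exact heg2 _
  exact ⟨_, _, _, _, _, _, _, _, _, _,
    isNCPoissonCoalgebra_of_leftInverse e g (LinearMap.ext hge) hom hE,
    e, he, ⟨Function.LeftInverse.injective hge, Function.RightInverse.surjective heg⟩,
    hom.1, hom.2⟩
end

section
/- Let (A,δ_A,Δ_A) be a noncommutative Poisson coalgebra, V a vector space, and let Ω and Ω' be two families of structure maps (φ,ψ,ρ,γ,α,β,p,s,δ_V,Δ_V) on (A,V) such that the associated type-(c1) unified coproducts A^{p,s}#V and A^{p',s'}#V on A⊕V are noncommutative Poisson coalgebras. Then every homomorphism of noncommutative Poisson coalgebras φ̃: A^{p,s}#V → A^{p',s'}#V whose restriction to A (embedded as A⊕0) is the identity of A is of the form φ̃(a,x) = (a + r(x), s̃(x)) for uniquely determined linear maps r: V→A and s̃: V→V; moreover such a φ̃ is an isomorphism if and only if s̃: V→V is a linear isomorphism. -/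
/-!
A linear endomorphism of `A × V` fixing `A × 0` pointwise is block upper triangular with identity block on
`A`, so it is determined by its restriction to `0 × V`, whose two components are `r` and `st`.
Such a block triangular map is bijective exactly when its other diagonal block `st` is.
-/

open scoped TensorProduct

open NCP

/-- Homomorphisms between type-(c1) unified coproducts which restrict to
the identity on `A` are exactly the maps `(a,x) ↦ (a + r(x), s̃(x))`, and such a map is an
isomorphism iff `s̃` is a linear isomorphism. -/
theorem statement12
    {k A V : Type*} [Field k] [CharZero k]
    [AddCommGroup A] [Module k A] [AddCommGroup V] [Module k V]
    (δA ΔA : A →ₗ[k] A ⊗[k] A) (hA : IsNCPoissonCoalgebra k δA ΔA)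
    (φ ρ : A →ₗ[k] V ⊗[k] A) (γ : A →ₗ[k] A ⊗[k] V)
    (ψ : V →ₗ[k] V ⊗[k] A) (α : V →ₗ[k] A ⊗[k] V) (β : V →ₗ[k] V ⊗[k] A)
    (p s : A →ₗ[k] V ⊗[k] V) (δV ΔV : V →ₗ[k] V ⊗[k] V)
    (φ' ρ' : A →ₗ[k] V ⊗[k] A) (γ' : A →ₗ[k] A ⊗[k] V)
    (ψ' : V →ₗ[k] V ⊗[k] A) (α' : V →ₗ[k] A ⊗[k] V) (β' : V →ₗ[k] V ⊗[k] A)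
    (p' s' : A →ₗ[k] V ⊗[k] V) (δV' ΔV' : V →ₗ[k] V ⊗[k] V)
    (h₁ : IsNCPoissonCoalgebra k (c1δ k δA δV φ ψ p) (c1Δ k ΔA ΔV ρ γ α β s))
    (h₂ : IsNCPoissonCoalgebra k (c1δ k δA δV' φ' ψ' p') (c1Δ k ΔA ΔV' ρ' γ' α' β' s'))
    (f : (A × V) →ₗ[k] (A × V))
    (hf : IsCoalgMapHom k (c1δ k δA δV φ ψ p) (c1Δ k ΔA ΔV ρ γ α β s)
      (c1δ k δA δV' φ' ψ' p') (c1Δ k ΔA ΔV' ρ' γ' α' β' s') f)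
    (hfA : ∀ a : A, f (a, 0) = (a, 0)) :
    ∃ (r : V →ₗ[k] A) (st : V →ₗ[k] V),
      (∀ (a : A) (x : V), f (a, x) = (a + r x, st x)) ∧
      (∀ (r' : V →ₗ[k] A) (st' : V →ₗ[k] V),
        (∀ (a : A) (x : V), f (a, x) = (a + r' x, st' x)) → r' = r ∧ st' = st) ∧
      (Function.Bijective f ↔ Function.Bijective st) := by
  have hform : ∀ (a : A) (x : V), f (a, x) = (a + (f (0, x)).1, (f (0, x)).2) := by
    intro a x
    have h : f (a, x) = f (a, 0) + f (0, x) := by rw [← map_add]; simp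
    rw [h, hfA]
    ext <;> simp
  refine ⟨LinearMap.fst k A V ∘ₗ f ∘ₗ LinearMap.inr k A V,
    LinearMap.snd k A V ∘ₗ f ∘ₗ LinearMap.inr k A V, hform, ?_, ?_⟩
  · intro r' st' h
    constructor <;> ext x <;> simp [h 0 x]
  · have hst : ∀ x, (LinearMap.snd k A V ∘ₗ f ∘ₗ LinearMap.inr k A V) x = (f (0, x)).2 :=
      fun _ => rfl
    constructor
    · rintro ⟨hinj, hsurj⟩
      constructor
      · intro x y hxy
        rw [hst, hst] at hxy
        -- Shifting by the `A`-components makes the two images under `f` agree.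
        have h : f (-(f (0, x)).1, x) = f (-(f (0, y)).1, y) := by
          rw [hform, hform (-(f (0, y)).1) y, hxy]
          simp
        exact congrArg Prod.snd (hinj h)
      · intro y
        obtain ⟨⟨a, x⟩, h⟩ := hsurj (0, y)
        rw [hform] at h
        exact ⟨x, congrArg Prod.snd h⟩
    · rintro ⟨hinj, hsurj⟩
      constructor
      · rintro ⟨a, x⟩ ⟨b, y⟩ h
        rw [hform, hform b y, Prod.mk.injEq] at h
        obtain rfl : x = y := hinj h.2
        rw [add_right_cancel h.1]
      · rintro ⟨b, y⟩
        obtain ⟨x, hx⟩ := hsurj y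
        rw [hst] at hx
        exact ⟨(b - (f (0, x)).1, x), by rw [hform, hx]; simp⟩
end
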